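/- Let λ : [t₀,∞) → (0,∞) be differentiable and let x : [t₀,∞) → H be differentiable. Then the map t ↦ Φ_{λ(t)}(x(t)) is differentiable on [t₀,∞) and for every t ≥ t₀ its derivative equals ⟨∇Φ_{λ(t)}(x(t)), ẋ(t)⟩ − (λ'(t)/2)·‖∇Φ_{λ(t)}(x(t))‖². -/

import Mathlib

open Set MeasureTheory Filter Real

noncomputable section

/-- Convexity for extended-real-valued functions. -/
def EConvexOn {H : Type*} [NormedAddCommGroup H] [NormedSpace ℝ H] (f : H → EReal) : Prop :=
  ∀ x y : H, ∀ a c : ℝ, 0 ≤ a → 0 ≤ c → a + c = 1 →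
    f (a • x + c • y) ≤ (a : EReal) * f x + (c : EReal) * f y

/-- `p` is the proximal point of `f` with parameter `l` at `x`, i.e. the (unique) minimizer of
`y ↦ f y + ‖x - y‖² / (2l)`. -/
def IsProxPt {H : Type*} [NormedAddCommGroup H] [InnerProductSpace ℝ H]
    (f : H → EReal) (l : ℝ) (x p : H) : Prop :=
  ∀ y : H, f p + ((‖x - p‖ ^ 2 / (2 * l) : ℝ) : EReal)
      ≤ f y + ((‖x - y‖ ^ 2 / (2 * l) : ℝ) : EReal)

/-- The Moreau envelope of `f` with parameter `l` (as a real number). -/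
def moreau {H : Type*} [NormedAddCommGroup H] [InnerProductSpace ℝ H]
    (f : H → EReal) (l : ℝ) (x : H) : ℝ :=
  (⨅ y : H, f y + ((‖x - y‖ ^ 2 / (2 * l) : ℝ) : EReal)).toReal

open Topology Asymptotics

/-- A function squeezed between two functions which agree with it at a point and have the same
derivative there has that derivative too. -/
theorem HasDerivAt.squeeze {f g h : ℝ → ℝ} {d t : ℝ} (hf : HasDerivAt f d t)
    (hh : HasDerivAt h d t) (hfg : ∀ᶠ s in 𝓝 t, f s ≤ g s) (hgh : ∀ᶠ s in 𝓝 t, g s ≤ h s)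
    (heq : f t = h t) : HasDerivAt g d t := by
  have hft : f t = g t := le_antisymm hfg.self_of_nhds (heq ▸ hgh.self_of_nhds)
  have hdiff : HasDerivAt (fun s => h s - f s) 0 t := by
    simpa only [sub_self] using hh.fun_sub hf
  have hgf : HasDerivAt (fun s => g s - f s) 0 t := by
    rw [hasDerivAt_iff_isLittleO] at hdiff ⊢
    refine IsBigO.trans_isLittleO (IsBigO.of_bound 1 ?_) hdiff
    filter_upwards [hfg, hgh] with s h₁ h₂
    simp only [smul_zero, sub_zero, heq, sub_self, Real.norm_eq_abs, one_mul, ← hft]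
    rw [abs_of_nonneg (by linarith), abs_of_nonneg (by linarith)]
    linarith
  simpa using hgf.fun_add hf

theorem EReal.toReal_mem_Icc {I : EReal} {c d : ℝ} (hd : (d : EReal) ≤ I) (hc : I ≤ (c : EReal)) :
    I.toReal ∈ Icc d c := by
  have hbot : I ≠ ⊥ := ((EReal.bot_lt_coe d).trans_le hd).ne'
  have htop : I ≠ ⊤ := (hc.trans_lt (EReal.coe_lt_top c)).ne
  lift I to ℝ using ⟨htop, hbot⟩
  exact ⟨EReal.coe_le_coe_iff.1 hd, EReal.coe_le_coe_iff.1 hc⟩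

section Prox

variable {H : Type*} [NormedAddCommGroup H] [InnerProductSpace ℝ H] {Φ : H → EReal} {l : ℝ}
  {x p : H}

theorem IsProxPt.ne_top (hp : IsProxPt Φ l x p) (hproper : ∃ y, Φ y ≠ ⊤) : Φ p ≠ ⊤ := by
  obtain ⟨y, hy⟩ := hproper
  intro h
  have := hp y
  rw [h, EReal.top_add_coe, top_le_iff] at this
  exact (EReal.add_lt_top hy (EReal.coe_ne_top _)).ne this

/-- At a proximal point `p` of `x`, the vector `l⁻¹ • (x - p)` is a subgradient. -/
theorem IsProxPt.subgradient (hp : IsProxPt Φ l x p) (hl : 0 < l) (hconv : EConvexOn Φ)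
    {a b : ℝ} {y : H} (ha : Φ p = a) (hb : Φ y = b) :
    a + inner ℝ (l⁻¹ • (x - p)) (y - p) ≤ b := by
  have key : ∀ θ ∈ Ioo (0 : ℝ) 1,
      a + inner ℝ (l⁻¹ • (x - p)) (y - p) ≤ b + θ * (‖y - p‖ ^ 2 / (2 * l)) := by
    rintro θ ⟨hθ, hθ'⟩
    have h₁ := hp ((1 - θ) • p + θ • y)
    have h₂ := hconv p y (1 - θ) θ (by linarith) hθ.le (by ring)
    have h₃ := h₁.trans (add_le_add_left h₂ _)
    rw [ha, hb] at h₃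
    norm_cast at h₃
    have hsub : x - ((1 - θ) • p + θ • y) = (x - p) - θ • (y - p) := by module
    rw [hsub, norm_sub_sq_real (x - p), inner_smul_right, norm_smul, Real.norm_of_nonneg hθ.le]
      at h₃
    rw [real_inner_smul_left]
    refine le_of_mul_le_mul_left ?_ hθ
    have e : (‖x - p‖ ^ 2 - 2 * (θ * inner ℝ (x - p) (y - p)) + (θ * ‖y - p‖) ^ 2) / (2 * l) =
        ‖x - p‖ ^ 2 / (2 * l) - θ * (l⁻¹ * inner ℝ (x - p) (y - p)) +
          θ * (θ * (‖y - p‖ ^ 2 / (2 * l))) := by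
      field_simp
    rw [e] at h₃
    linarith
  have hlim : Tendsto (fun θ : ℝ => b + θ * (‖y - p‖ ^ 2 / (2 * l))) (𝓝[>] 0) (𝓝 b) := by
    have : ContinuousAt (fun θ : ℝ => b + θ * (‖y - p‖ ^ 2 / (2 * l))) 0 := by fun_prop
    simpa [ContinuousAt] using this.tendsto.mono_left nhdsWithin_le_nhds
  exact ge_of_tendsto hlim (eventually_of_mem (Ioo_mem_nhdsGT one_pos) key)

/-- A proximal point of `x` with parameter `l` bounds the Moreau envelope from both sides at every
other point and parameter. -/
theorem IsProxPt.moreau_mem_Icc (hp : IsProxPt Φ l x p) (hl : 0 < l) (hconv : EConvexOn Φ)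
    (hbot : ∀ y, Φ y ≠ ⊥) {a : ℝ} (ha : Φ p = a) {m : ℝ} (hm : 0 < m) (z : H) :
    moreau Φ m z ∈ Icc
      (a + inner ℝ (l⁻¹ • (x - p)) (z - p) - m / 2 * ‖l⁻¹ • (x - p)‖ ^ 2)
      (a + ‖z - p‖ ^ 2 / (2 * m)) := by
  refine EReal.toReal_mem_Icc (le_iInf fun y => ?_) ((iInf_le _ p).trans ?_)
  · by_cases hy : Φ y = ⊤
    · simp [hy]
    have hb : Φ y = ((Φ y).toReal : EReal) := (EReal.coe_toReal hy (hbot y)).symm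
    have hsub := hp.subgradient hl hconv ha hb
    rw [hb]
    norm_cast
    set g := l⁻¹ • (x - p)
    have hz : inner ℝ g (z - p) = inner ℝ g (z - y) + inner ℝ g (y - p) := by
      rw [← inner_add_right, sub_add_sub_cancel]
    have hsq : 0 ≤ ‖(z - y) - m • g‖ ^ 2 / (2 * m) := by positivity
    rw [norm_sub_sq_real, inner_smul_right, norm_smul, Real.norm_of_nonneg hm.le,
      real_inner_comm] at hsq
    have e : (‖z - y‖ ^ 2 - 2 * (m * inner ℝ g (z - y)) + (m * ‖g‖) ^ 2) / (2 * m) =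
        ‖z - y‖ ^ 2 / (2 * m) - inner ℝ g (z - y) + m / 2 * ‖g‖ ^ 2 := by
      field_simp
    rw [e] at hsq
    linarith
  · rw [ha]
    norm_cast

end Prox

theorem moreau_envelope_chain_rule
    {H : Type*} [NormedAddCommGroup H] [InnerProductSpace ℝ H] [CompleteSpace H]
    (Φ : H → EReal)
    (hΦbot : ∀ y, Φ y ≠ ⊥) (hΦproper : ∃ y, Φ y ≠ ⊤)
    (hΦconv : EConvexOn Φ) (hΦlsc : LowerSemicontinuous Φ)
    (hargmin : ∃ z, ∀ y, Φ z ≤ Φ y)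
    (t₀ : ℝ) (ht₀ : 0 < t₀)
    (lam lam' : ℝ → ℝ)
    (hlampos : ∀ t ≥ t₀, 0 < lam t)
    (hlam' : ∀ t ≥ t₀, HasDerivAt lam (lam' t) t)
    (x v p : ℝ → H)
    (hx : ∀ t ≥ t₀, HasDerivAt x (v t) t)
    (hp : ∀ t ≥ t₀, IsProxPt Φ (lam t) (x t) (p t))
    :
    ∀ t ≥ t₀, HasDerivAt (fun s => moreau Φ (lam s) (x s))
      ((inner ℝ ((lam t)⁻¹ • (x t - p t)) (v t) : ℝ)
        - lam' t / 2 * ‖(lam t)⁻¹ • (x t - p t)‖ ^ 2) t := by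
  intro t ht
  have hl := hlampos t ht
  have ha : Φ (p t) = ((Φ (p t)).toReal : EReal) :=
    (EReal.coe_toReal ((hp t ht).ne_top hΦproper) (hΦbot _)).symm
  have hpos : ∀ᶠ s in 𝓝 t, 0 < lam s := (hlam' t ht).continuousAt.eventually (lt_mem_nhds hl)
  have hbound := fun s (hs : 0 < lam s) =>
    (hp t ht).moreau_mem_Icc hl hΦconv hΦbot ha hs (x s)
  have hxp : HasDerivAt (fun s => x s - p t) (v t) t := (hx t ht).sub_const _
  refine HasDerivAt.squeeze ?_ ?_ (hpos.mono fun s hs => (hbound s hs).1)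
    (hpos.mono fun s hs => (hbound s hs).2) ?_
  · have hinner : HasDerivAt (fun s => inner ℝ ((lam t)⁻¹ • (x t - p t)) (x s - p t))
        (inner ℝ ((lam t)⁻¹ • (x t - p t)) (v t)) t := by
      simpa using (hasDerivAt_const t ((lam t)⁻¹ • (x t - p t))).inner ℝ hxp
    exact (hinner.const_add _).sub (((hlam' t ht).div_const 2).mul_const _)
  · refine ((hxp.norm_sq.fun_div ((hlam' t ht).const_mul 2) (by positivity)).const_add
      (Φ (p t)).toReal).congr_deriv ?_
    rw [real_inner_smul_left, norm_smul, Real.norm_of_nonneg (by positivity)]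
    field_simp
  · rw [real_inner_smul_left, real_inner_self_eq_norm_sq, norm_smul,
      Real.norm_of_nonneg (by positivity)]
    field_simp
    ring
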